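/- (Proposition 3.2.) If a preperiodic sequence q on the network N is fragmentarily asymptotically stable, then q is fragmentarily asymptotically stable of finite type: for every δ > 0 there exists k₀ ∈ ℕ such that μ(D_δ^(k)(q)) = 0 for all k > k₀. -/

import Mathlib

open MeasureTheory Filter Topology Metric Set

noncomputable section

/-- The shift operator `Σ` on sequences: `(Σ q) k = q (k+1)`. -/
def shiftSeq {A : Type*} (q : ℕ → A) : ℕ → A := fun k => q (k + 1)

/-- A sequence is preperiodic if there exist `K ≥ 1` and `K₀ ≥ 0` with
`q (k + K) = q k` for all `k > K₀`. -/
def PreperiodicSeq {A : Type*} (q : ℕ → A) : Prop :=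
  ∃ K : ℕ, 1 ≤ K ∧ ∃ K₀ : ℕ, ∀ k > K₀, q (k + K) = q k

/-- Euclidean space `ℝ^d`. -/
abbrev Es (d : ℕ) := EuclideanSpace ℝ (Fin d)

/-- The heteroclinic network as a subset of phase space:
`N = (⋃ p, {ξ p}) ∪ (⋃ j, γ j)`. -/
def netSet {d P Q : ℕ} (ξ : Fin P → Es d) (γ : Fin Q → Set (Es d)) : Set (Es d) :=
  (⋃ p, {ξ p}) ∪ ⋃ j, γ j

/-- `x` follows the sequence `q` within `UN`: there are times
`0 ≤ t 0 < t' 0 < t 1 < t' 1 < ⋯` such that the trajectory of `x` stays in `UN`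
after time `t 0`, visits the neighborhoods `U (a (q k))` and `V (q k)` at times
`t k` and `t' k`, and between `t' k` and `t' (k+1)` avoids all neighborhoods
`U p` with `p ≠ b (q k)`. -/
def FollowsSeq {d P Q : ℕ} (φ : ℝ → Es d → Es d)
    (U : Fin P → Set (Es d)) (V : Fin Q → Set (Es d))
    (a b : Fin Q → Fin P) (UN : Set (Es d)) (q : ℕ → Fin Q) (x : Es d) : Prop :=
  ∃ t t' : ℕ → ℝ,
    0 ≤ t 0 ∧ (∀ k, t k < t' k) ∧ (∀ k, t' k < t (k + 1)) ∧
    (∀ s, t 0 < s → φ s x ∈ UN) ∧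
    (∀ k, φ (t k) x ∈ U (a (q k))) ∧
    (∀ k, φ (t' k) x ∈ V (q k)) ∧
    (∀ k, ∀ s, t' k < s → s < t' (k + 1) → ∀ p, p ≠ b (q k) → φ s x ∉ U p)

/-- The `δ`-stable set `S_δ(q)` of a sequence `q`. -/
def stableSet {d P Q : ℕ} (φ : ℝ → Es d → Es d) (ξ : Fin P → Es d) (γ : Fin Q → Set (Es d))
    (U : Fin P → Set (Es d)) (V : Fin Q → Set (Es d)) (a b : Fin Q → Fin P)
    (δ : ℝ) (q : ℕ → Fin Q) : Set (Es d) :=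
  {x ∈ thickening δ (netSet ξ γ) |
    FollowsSeq φ U V a b (thickening δ (netSet ξ γ)) q x}

/-- The set `A_δ(q)` of points attracted to `N` along `q`. -/
def attrSet {d P Q : ℕ} (φ : ℝ → Es d → Es d) (ξ : Fin P → Es d) (γ : Fin Q → Set (Es d))
    (U : Fin P → Set (Es d)) (V : Fin Q → Set (Es d)) (a b : Fin Q → Fin P)
    (δ : ℝ) (q : ℕ → Fin Q) : Set (Es d) :=
  {x ∈ stableSet φ ξ γ U V a b δ q |
    Tendsto (fun t => infDist (φ t x) (netSet ξ γ)) atTop (𝓝 0)}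

/-- The asymptotic `δ`-basin of attraction `B_δ(q) = ⋃ k, A_δ(Σ^k q)`. -/
def basin {d P Q : ℕ} (φ : ℝ → Es d → Es d) (ξ : Fin P → Es d) (γ : Fin Q → Set (Es d))
    (U : Fin P → Set (Es d)) (V : Fin Q → Set (Es d)) (a b : Fin Q → Fin P)
    (δ : ℝ) (q : ℕ → Fin Q) : Set (Es d) :=
  ⋃ k : ℕ, attrSet φ ξ γ U V a b δ (shiftSeq^[k] q)

/-- The difference set `D_δ^(k)(q) = A_δ(Σ^k q) \ A_δ(Σ^(k-1) q)` (for `k ≥ 1`). -/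
def Dset {d P Q : ℕ} (φ : ℝ → Es d → Es d) (ξ : Fin P → Es d) (γ : Fin Q → Set (Es d))
    (U : Fin P → Set (Es d)) (V : Fin Q → Set (Es d)) (a b : Fin Q → Fin P)
    (δ : ℝ) (q : ℕ → Fin Q) (k : ℕ) : Set (Es d) :=
  attrSet φ ξ γ U V a b δ (shiftSeq^[k] q) \
    attrSet φ ξ γ U V a b δ (shiftSeq^[k - 1] q)

/-- Fragmentary asymptotic stability of a sequence: `μ(B_δ(q)) > 0` for every `δ > 0`. -/
def FAS {d P Q : ℕ} (φ : ℝ → Es d → Es d) (ξ : Fin P → Es d) (γ : Fin Q → Set (Es d))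
    (U : Fin P → Set (Es d)) (V : Fin Q → Set (Es d)) (a b : Fin Q → Fin P)
    (q : ℕ → Fin Q) : Prop :=
  ∀ δ : ℝ, 0 < δ → 0 < volume (basin φ ξ γ U V a b δ q)

/-!
Discarding the first pair of times shows that a point following `q` also follows `Σ q`, so
`A_δ(q) ⊆ A_δ(Σ q)`. If `q` is preperiodic, then `Σ^k q` is a periodic point of `Σ` for all large
`k`; going once around its cycle, the increasing sets `A_δ` come back to where they started, so
they are constant along the cycle and `D_δ^(k)(q)` is not merely null but empty.
-/

theorem map_apply_le_of_mem_periodicPts {X α : Type*} [Preorder α] {f : X → X} {A : X → α}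
    (hA : ∀ x, A x ≤ A (f x)) {x : X} (hx : x ∈ Function.periodicPts f) : A (f x) ≤ A x := by
  obtain ⟨K, hK, hper⟩ := hx
  have hmono : Monotone fun n => A (f^[n] x) := monotone_nat_of_le_succ fun n => by
    simpa only [Function.iterate_succ_apply'] using hA (f^[n] x)
  calc
    A (f x) ≤ A (f^[K] x) := hmono (Nat.one_le_of_lt hK)
    _ = A x := by rw [hper.eq]

theorem shiftSeq_iterate_apply {A : Type*} (q : ℕ → A) (n k : ℕ) :
    shiftSeq^[n] q k = q (k + n) := by
  induction n generalizing q with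
  | zero => rfl
  | succ n ih => rw [Function.iterate_succ_apply, ih, shiftSeq, Nat.add_assoc]

theorem PreperiodicSeq.exists_shiftSeq_iterate_mem_periodicPts {A : Type*} {q : ℕ → A}
    (hq : PreperiodicSeq q) :
    ∃ K₀ : ℕ, ∀ k > K₀, shiftSeq^[k] q ∈ Function.periodicPts shiftSeq := by
  obtain ⟨K, hK, K₀, hper⟩ := hq
  refine ⟨K₀, fun k hk => ⟨K, hK, funext fun n => ?_⟩⟩
  calc
    shiftSeq^[K] (shiftSeq^[k] q) n = q (n + k + K) := by
      rw [shiftSeq_iterate_apply, shiftSeq_iterate_apply, Nat.add_right_comm]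
    _ = q (n + k) := hper _ (Nat.lt_add_left n hk)
    _ = shiftSeq^[k] q n := (shiftSeq_iterate_apply q k n).symm

section Network

variable {d P Q : ℕ} {φ : ℝ → Es d → Es d} {ξ : Fin P → Es d} {γ : Fin Q → Set (Es d)}
  {U : Fin P → Set (Es d)} {V : Fin Q → Set (Es d)} {a b : Fin Q → Fin P} {q : ℕ → Fin Q}

theorem FollowsSeq.shiftSeq {UN : Set (Es d)} {x : Es d} (h : FollowsSeq φ U V a b UN q x) :
    FollowsSeq φ U V a b UN (shiftSeq q) x := by
  obtain ⟨t, t', h0, htt', ht't, hUN, hU, hV, havoid⟩ := h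
  have h01 : t 0 < t 1 := (htt' 0).trans (ht't 0)
  exact ⟨fun k => t (k + 1), fun k => t' (k + 1), h0.trans h01.le, fun k => htt' (k + 1),
    fun k => ht't (k + 1), fun s hs => hUN s (h01.trans hs), fun k => hU (k + 1),
    fun k => hV (k + 1), fun k => havoid (k + 1)⟩

theorem attrSet_subset_attrSet_shiftSeq (δ : ℝ) (q : ℕ → Fin Q) :
    attrSet φ ξ γ U V a b δ q ⊆ attrSet φ ξ γ U V a b δ (shiftSeq q) :=
  fun _ ⟨⟨hnear, hfollows⟩, hattracted⟩ => ⟨⟨hnear, hfollows.shiftSeq⟩, hattracted⟩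

theorem Dset_succ (δ : ℝ) (q : ℕ → Fin Q) (k : ℕ) :
    Dset φ ξ γ U V a b δ q (k + 1) =
      attrSet φ ξ γ U V a b δ (shiftSeq (shiftSeq^[k] q)) \
        attrSet φ ξ γ U V a b δ (shiftSeq^[k] q) := by
  rw [Dset, Function.iterate_succ_apply', Nat.add_sub_cancel]

theorem Dset_succ_eq_empty_of_mem_periodicPts {k : ℕ}
    (hk : shiftSeq^[k] q ∈ Function.periodicPts shiftSeq) (δ : ℝ) :
    Dset φ ξ γ U V a b δ q (k + 1) = ∅ := by
  rw [Dset_succ, sdiff_eq_empty]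
  exact map_apply_le_of_mem_periodicPts (attrSet_subset_attrSet_shiftSeq δ) hk

end Network

theorem ffas_of_preperiodic_fas_general {d P Q : ℕ} (φ : ℝ → Es d → Es d) (ξ : Fin P → Es d)
    (γ : Fin Q → Set (Es d)) (U : Fin P → Set (Es d)) (V : Fin Q → Set (Es d))
    (a b : Fin Q → Fin P) {q : ℕ → Fin Q} (hpre : PreperiodicSeq q) :
    ∃ k₀ : ℕ, ∀ k > k₀, ∀ δ : ℝ, Dset φ ξ γ U V a b δ q k = ∅ := by
  obtain ⟨K₀, hper⟩ := hpre.exists_shiftSeq_iterate_mem_periodicPts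
  refine ⟨K₀ + 1, fun k hk δ => ?_⟩
  obtain ⟨m, rfl⟩ := Nat.exists_eq_add_one_of_ne_zero (Nat.ne_zero_of_lt hk)
  exact Dset_succ_eq_empty_of_mem_periodicPts (hper m (Nat.lt_of_succ_lt_succ hk)) δ

/-- Proposition 3.2: a preperiodic f.a.s. sequence is f.a.s. of finite type. -/
theorem ffas_of_preperiodic_fas
    {d P Q : ℕ} (hd : 1 ≤ d) (hP : 1 ≤ P) (hQ : 1 ≤ Q)
    (φ : ℝ → Es d → Es d)
    (hφcont : Continuous fun pr : ℝ × Es d => φ pr.1 pr.2)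
    (hφ0 : ∀ x, φ 0 x = x)
    (hφadd : ∀ s t x, φ (s + t) x = φ s (φ t x))
    (ξ : Fin P → Es d) (hξinj : Function.Injective ξ)
    (hfix : ∀ t p, φ t (ξ p) = ξ p)
    (γ : Fin Q → Set (Es d)) (hγne : ∀ j, (γ j).Nonempty)
    (hγinv : ∀ j t x, x ∈ γ j → φ t x ∈ γ j)
    (a b : Fin Q → Fin P)
    (hω : ∀ j, ∀ x ∈ γ j, Tendsto (fun t => φ t x) atTop (𝓝 (ξ (b j))))
    (hα : ∀ j, ∀ x ∈ γ j, Tendsto (fun t => φ t x) atBot (𝓝 (ξ (a j))))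
    (ζ : Fin Q → Es d) (hζ : ∀ j, ζ j ∈ γ j)
    (U : Fin P → Set (Es d)) (hUopen : ∀ p, IsOpen (U p)) (hUmem : ∀ p, ξ p ∈ U p)
    (V : Fin Q → Set (Es d)) (hVopen : ∀ j, IsOpen (V j)) (hVmem : ∀ j, ζ j ∈ V j)
    (hUU : ∀ p p', p ≠ p' → Disjoint (closure (U p)) (closure (U p')))
    (hVV : ∀ j j', j ≠ j' → Disjoint (closure (V j)) (closure (V j')))
    (hUV : ∀ p j, Disjoint (closure (U p)) (closure (V j)))
    (q : ℕ → Fin Q) (hq : ∀ k, b (q k) = a (q (k + 1)))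
    (hpre : PreperiodicSeq q) (hfas : FAS φ ξ γ U V a b q) :
    ∀ δ : ℝ, 0 < δ → ∃ k₀ : ℕ, ∀ k : ℕ, k₀ < k →
      volume (Dset φ ξ γ U V a b δ q k) = 0 := by
  obtain ⟨k₀, hempty⟩ := ffas_of_preperiodic_fas_general φ ξ γ U V a b hpre
  exact fun δ _ => ⟨k₀, fun k hk => by rw [hempty k hk δ, measure_empty]⟩
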